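/- Let h be a harmonic function on the ball B_r ⊂ ℝⁿ with finite Dirichlet energy and h(0) = 0. Then for any 0 < s < r, ∫_{B_s} h² ≤ (s/r)^{n+2} ∫_{B_r} h². -/

import Mathlib

open Real MeasureTheory Metric

noncomputable def laplacian {n : ℕ} (f : EuclideanSpace ℝ (Fin n) → ℝ)
    (x : EuclideanSpace ℝ (Fin n)) : ℝ :=
  ∑ i, fderiv ℝ (fun y => fderiv ℝ f y (EuclideanSpace.single i 1)) x
    (EuclideanSpace.single i 1)


open Topology

theorem hg_supp {n : ℕ} {U : Set (EuclideanSpace ℝ (Fin n))} (hU : IsOpen U)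
    {η w : EuclideanSpace ℝ (Fin n) → ℝ} {ρ : ℝ} (hη : Continuous η)
    (hη0 : ∀ x, ρ ≤ ‖x‖ → η x = 0) (hρ : closedBall 0 ρ ⊆ U) (hw : ContinuousOn w U) :
    Continuous (fun x => η x * w x) ∧ HasCompactSupport (fun x => η x * w x) := by
  constructor
  · rw [continuous_iff_continuousAt]
    intro x
    by_cases hx : x ∈ U
    · exact hη.continuousAt.mul (hw.continuousAt (hU.mem_nhds hx))
    · have hx' : ρ < ‖x‖ := by
        by_contra hc
        exact hx (hρ (by simpa using hc))
      have : (fun x => η x * w x) =ᶠ[𝓝 x] fun _ => 0 := by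
        filter_upwards [continuous_norm.continuousAt.eventually (lt_mem_nhds hx')] with y hy
        rw [hη0 y hy.le, zero_mul]
      exact continuousAt_const.congr this.symm
  · apply HasCompactSupport.intro (isCompact_closedBall 0 ρ)
    intro x hx
    rw [hη0 x (by simp at hx; exact hx.le), zero_mul]

theorem hg_int {n : ℕ} {U : Set (EuclideanSpace ℝ (Fin n))} (hU : IsOpen U)
    {η w : EuclideanSpace ℝ (Fin n) → ℝ} {ρ : ℝ} (hη : Continuous η)
    (hη0 : ∀ x, ρ ≤ ‖x‖ → η x = 0) (hρ : closedBall 0 ρ ⊆ U) (hw : ContinuousOn w U) :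
    Integrable (fun x => η x * w x) :=
  (hg_supp hU hη hη0 hρ hw).1.integrable_of_hasCompactSupport (hg_supp hU hη hη0 hρ hw).2

theorem hg_int_fderiv {n : ℕ} {W : EuclideanSpace ℝ (Fin n) → ℝ} (hW : ContDiff ℝ 1 W)
    (hc : HasCompactSupport W) (e : EuclideanSpace ℝ (Fin n)) :
    Integrable (fun x => fderiv ℝ W x e) ∧ ∫ x, fderiv ℝ W x e = 0 := by
  have h1 : Integrable (fun x => fderiv ℝ W x e) := by
    apply Continuous.integrable_of_hasCompactSupport
    · exact (hW.continuous_fderiv (by norm_num)).clm_apply continuous_const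
    · exact hc.fderiv_apply ℝ e
  refine ⟨h1, ?_⟩
  have := integral_mul_fderiv_eq_neg_fderiv_mul_of_integrable (μ := (volume : Measure (EuclideanSpace ℝ (Fin n))))
    (f := fun _ => (1:ℝ)) (g := W) (v := e) (by simp) (by simpa using h1)
    (by simpa using hW.continuous.integrable_of_hasCompactSupport hc)
    (fun x _ => by fun_prop) (fun x _ => hW.differentiable (by norm_num) x)
  simpa using this

theorem hg_ibp {n : ℕ} {U : Set (EuclideanSpace ℝ (Fin n))} (hU : IsOpen U)
    {u v : EuclideanSpace ℝ (Fin n) → ℝ} {ρ : ℝ} (hρ0 : 0 ≤ ρ) (hρ : closedBall 0 ρ ⊆ U)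
    {P p : ℝ → ℝ} (hP : ∀ t, HasDerivAt P (p t) t) (hp : Continuous p)
    (hP0 : ∀ t, ρ ^ 2 ≤ t → P t = 0)
    (hu : ContDiffOn ℝ 2 u U) (hv : ContDiffOn ℝ 2 v U)
    (hlu : ∀ x ∈ U, laplacian u x = 0) (hlv : ∀ x ∈ U, laplacian v x = 0) :
    ∫ x, p (‖x‖ ^ 2) * (v x * fderiv ℝ u x x - u x * fderiv ℝ v x x) = 0 := by
  have hPC : ContDiff ℝ 1 P := by
    rw [contDiff_one_iff_deriv]
    refine ⟨fun t => (hP t).differentiableAt, ?_⟩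
    have : deriv P = p := funext fun t => (hP t).deriv
    rwa [this]
  have hη : ContDiff ℝ 1 (fun x : EuclideanSpace ℝ (Fin n) => P (‖x‖ ^ 2)) :=
    hPC.comp (contDiff_norm_sq ℝ)
  have hη0 : ∀ x : EuclideanSpace ℝ (Fin n), ρ ≤ ‖x‖ → P (‖x‖ ^ 2) = 0 := fun x hx =>
    hP0 _ (by gcongr)
  set e : Fin n → EuclideanSpace ℝ (Fin n) := fun i => EuclideanSpace.single i 1 with he
  have hdu : ∀ i, ContDiffOn ℝ 1 (fun x => fderiv ℝ u x (e i)) U := fun i =>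
    (hu.fderiv_of_isOpen hU (by norm_num)).clm_apply contDiffOn_const
  have hdv : ∀ i, ContDiffOn ℝ 1 (fun x => fderiv ℝ v x (e i)) U := fun i =>
    (hv.fderiv_of_isOpen hU (by norm_num)).clm_apply contDiffOn_const
  set w : Fin n → EuclideanSpace ℝ (Fin n) → ℝ := fun i x =>
    v x * fderiv ℝ u x (e i) - u x * fderiv ℝ v x (e i) with hw
  have hwC : ∀ i, ContDiffOn ℝ 1 (w i) U := fun i =>
    ((hv.of_le (by norm_num)).mul (hdu i)).sub ((hu.of_le (by norm_num)).mul (hdv i))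
  have hWC : ∀ i, ContDiff ℝ 1 (fun x => P (‖x‖ ^ 2) * w i x) := by
    intro i
    rw [contDiff_iff_contDiffAt]
    intro x
    by_cases hx : x ∈ U
    · exact hη.contDiffAt.mul ((hwC i).contDiffAt (hU.mem_nhds hx))
    · have hx' : ρ < ‖x‖ := by
        by_contra hc
        exact hx (hρ (by simpa using hc))
      have : (fun x => P (‖x‖ ^ 2) * w i x) =ᶠ[𝓝 x] fun _ => 0 := by
        filter_upwards [continuous_norm.continuousAt.eventually (lt_mem_nhds hx')] with y hy
        rw [hη0 y hy.le, zero_mul]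
      exact contDiffAt_const.congr_of_eventuallyEq this
  have hsupp := fun i => (hg_supp hU hη.continuous hη0 hρ (hwC i).continuousOn).2
  have key := fun i => hg_int_fderiv (hWC i) (hsupp i) (e i)
  have hsum : ∫ x, ∑ i, fderiv ℝ (fun x => P (‖x‖ ^ 2) * w i x) x (e i) = 0 := by
    rw [integral_finsetSum _ (fun i _ => (key i).1)]
    exact Finset.sum_eq_zero fun i _ => (key i).2
  have hp0 : ∀ t, ρ ^ 2 < t → p t = 0 := by
    intro t ht
    have : P =ᶠ[𝓝 t] fun _ => 0 := by
      filter_upwards [lt_mem_nhds ht] with y hy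
      exact hP0 y hy.le
    rw [← (hP t).deriv, this.deriv_eq, deriv_const]
  have hpt : ∀ x, ∑ i, fderiv ℝ (fun x => P (‖x‖ ^ 2) * w i x) x (e i)
      = 2 * (p (‖x‖ ^ 2) * (v x * fderiv ℝ u x x - u x * fderiv ℝ v x x)) := by
    intro x
    by_cases hx : x ∈ U
    · have hxn := hU.mem_nhds hx
      have hu1 : DifferentiableAt ℝ u x := (hu.contDiffAt hxn).differentiableAt (by norm_num)
      have hv1 : DifferentiableAt ℝ v x := (hv.contDiffAt hxn).differentiableAt (by norm_num)
      have hu2 : ∀ i, DifferentiableAt ℝ (fun x => fderiv ℝ u x (e i)) x := fun i =>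
        ((hdu i).contDiffAt hxn).differentiableAt (by norm_num)
      have hv2 : ∀ i, DifferentiableAt ℝ (fun x => fderiv ℝ v x (e i)) x := fun i =>
        ((hdv i).contDiffAt hxn).differentiableAt (by norm_num)
      have hN : HasFDerivAt (fun x : EuclideanSpace ℝ (Fin n) => P (‖x‖ ^ 2))
          (p (‖x‖ ^ 2) • (2 • (innerSL ℝ x))) x :=
        (hP (‖x‖ ^ 2)).comp_hasFDerivAt x (hasStrictFDerivAt_norm_sq x).hasFDerivAt
      have h1 : ∀ i, fderiv ℝ (fun x => P (‖x‖ ^ 2) * w i x) x (e i)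
          = P (‖x‖ ^ 2) * (v x * fderiv ℝ (fun y => fderiv ℝ u y (e i)) x (e i)
              - u x * fderiv ℝ (fun y => fderiv ℝ v y (e i)) x (e i))
            + 2 * p (‖x‖ ^ 2) * (v x * (x i * fderiv ℝ u x (e i)) - u x * (x i * fderiv ℝ v x (e i))) := by
        intro i
        have hd := hN.mul ((hv1.hasFDerivAt.mul (hu2 i).hasFDerivAt).sub
          (hu1.hasFDerivAt.mul (hv2 i).hasFDerivAt))
        have hin : inner ℝ x (e i) = x i := by
          simp [he, EuclideanSpace.inner_single_right]
        have hd' : fderiv ℝ (fun x => P (‖x‖ ^ 2) * w i x) x = _ := hd.fderiv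
        rw [hd']
        simp [hin]
        ring
      have hx1 : ∀ L : EuclideanSpace ℝ (Fin n) →L[ℝ] ℝ, L x = ∑ i, x i * L (e i) := by
        intro L
        have := (EuclideanSpace.basisFun (Fin n) ℝ).sum_repr x
        conv_lhs => rw [← this]
        simp [he]
      have e1 := hlu x hx
      have e2 := hlv x hx
      unfold laplacian at e1 e2
      simp_rw [h1]
      rw [Finset.sum_add_distrib, ← Finset.mul_sum, Finset.sum_sub_distrib, ← Finset.mul_sum,
        ← Finset.mul_sum, ← Finset.mul_sum, Finset.sum_sub_distrib, ← Finset.mul_sum,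
        ← Finset.mul_sum, ← hx1, ← hx1, e1, e2]
      ring
    · have hx' : ρ < ‖x‖ := by
        by_contra hc
        exact hx (hρ (by simpa using hc))
      have : ∀ i, (fun x => P (‖x‖ ^ 2) * w i x) =ᶠ[𝓝 x] fun _ => 0 := by
        intro i
        filter_upwards [continuous_norm.continuousAt.eventually (lt_mem_nhds hx')] with y hy
        rw [hη0 y hy.le, zero_mul]
      rw [Finset.sum_eq_zero (fun i _ => by rw [(this i).fderiv_eq]; simp), hp0 _ (by gcongr)]
      simp
  simp_rw [hpt] at hsum
  rw [integral_const_mul] at hsum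
  linarith

theorem hg_scale {n : ℕ} (h : EuclideanSpace ℝ (Fin n) → ℝ) (a : ℝ)
    (x : EuclideanSpace ℝ (Fin n)) :
    laplacian (fun y => h (a • y)) x = a ^ 2 * laplacian h (a • x) := by
  unfold laplacian
  rw [Finset.mul_sum]
  refine Finset.sum_congr rfl fun i _ => ?_
  have h1 : (fun y => fderiv ℝ (fun y => h (a • y)) y (EuclideanSpace.single i 1))
      = fun y => a • (fun z => fderiv ℝ h z (EuclideanSpace.single i 1)) (a • y) := by
    funext y
    rw [fderiv_comp_smul]
    simp
  rw [h1]
  change fderiv ℝ (a • fun y => (fun z => fderiv ℝ h z (EuclideanSpace.single i 1)) (a • y)) x _ = _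
  rw [fderiv_const_smul_field]
  have h2 := congrArg (fun L => L (EuclideanSpace.single i 1))
    (fderiv_comp_smul (𝕜 := ℝ) (f := fun z => fderiv ℝ h z (EuclideanSpace.single i (1:ℝ))) (x := x) a)
  simp only [Pi.smul_apply, _root_.smul_apply, smul_eq_mul] at h2 ⊢
  rw [h2]
  ring

theorem hg_deriv {n : ℕ} {r ρ m l₀ : ℝ} (hρ0 : 0 ≤ ρ)
    (h : EuclideanSpace ℝ (Fin n) → ℝ)
    (hsm : ContDiffOn ℝ 2 h (Metric.ball 0 r))
    (hharm : ∀ x ∈ Metric.ball (0 : EuclideanSpace ℝ (Fin n)) r, laplacian h x = 0)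
    {P p : ℝ → ℝ} (hP : ∀ t, HasDerivAt P (p t) t) (hp : Continuous p)
    (hP0 : ∀ t, ρ ^ 2 ≤ t → P t = 0) (hp0 : ∀ t, ρ ^ 2 ≤ t → p t = 0)
    (hm : 0 < m) (hl : 0 < l₀) (hl1 : m * l₀ * ρ < r) (hl2 : m / l₀ * ρ < r) :
    HasDerivAt (fun l => ∫ x : EuclideanSpace ℝ (Fin n),
      p (‖x‖ ^ 2) * (h ((m * l) • x) * h ((m / l) • x))) 0 l₀ := by
  have hpη : Continuous (fun x : EuclideanSpace ℝ (Fin n) => p (‖x‖ ^ 2)) := by fun_prop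
  have hpη0 : ∀ x : EuclideanSpace ℝ (Fin n), ρ ≤ ‖x‖ → p (‖x‖ ^ 2) = 0 := fun x hx =>
    hp0 _ (by gcongr)
  have hI : ∀ᶠ l in 𝓝 l₀, 0 < l ∧ m * l * ρ < r ∧ m / l * ρ < r := by
    refine (lt_mem_nhds hl).and (Filter.Eventually.and ?_ ?_)
    · have : ContinuousAt (fun l : ℝ => m * l * ρ) l₀ := by fun_prop
      exact this.eventually (gt_mem_nhds hl1)
    · have : ContinuousAt (fun l : ℝ => m / l * ρ) l₀ := by
        have := hl.ne'
        fun_prop (disch := assumption)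
      exact this.eventually (gt_mem_nhds hl2)
  obtain ⟨ε, hε, hεI⟩ := (nhds_basis_closedBall.mem_iff).1 hI
  have hmem : ∀ c : ℝ, 0 ≤ c → c * ρ < r → ∀ x : EuclideanSpace ℝ (Fin n), ‖x‖ ≤ ρ →
      c • x ∈ ball (0 : EuclideanSpace ℝ (Fin n)) r := by
    intro c hc hcr x hx
    rw [mem_ball_zero_iff, norm_smul, Real.norm_of_nonneg hc]
    exact lt_of_le_of_lt (by gcongr) hcr
  have hdiff : ∀ y ∈ ball (0 : EuclideanSpace ℝ (Fin n)) r, DifferentiableAt ℝ h y := fun y hy =>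
    (hsm.contDiffAt (isOpen_ball.mem_nhds hy)).differentiableAt (by norm_num)
  have hfc : ContinuousOn (fderiv ℝ h) (ball 0 r) :=
    hsm.continuousOn_fderiv_of_isOpen isOpen_ball (by norm_num)
  -- the derivative kernel
  let k : ℝ → EuclideanSpace ℝ (Fin n) → ℝ := fun l x =>
    fderiv ℝ h ((m * l) • x) (m • x) * h ((m / l) • x)
      + h ((m * l) • x) * fderiv ℝ h ((m / l) • x) ((-(m / l ^ 2)) • x)
  have hkc : ContinuousOn (fun q : ℝ × EuclideanSpace ℝ (Fin n) => k q.1 q.2)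
      (closedBall l₀ ε ×ˢ closedBall 0 ρ) := by
    have c1 : ContinuousOn (fun q : ℝ × EuclideanSpace ℝ (Fin n) => (m * q.1) • q.2)
      (closedBall l₀ ε ×ˢ closedBall 0 ρ) := by fun_prop
    have hne : ∀ q ∈ closedBall l₀ ε ×ˢ closedBall (0 : EuclideanSpace ℝ (Fin n)) ρ, q.1 ≠ 0 :=
      fun q hq => (hεI hq.1).1.ne'
    have c2 : ContinuousOn (fun q : ℝ × EuclideanSpace ℝ (Fin n) => (m / q.1) • q.2)
        (closedBall l₀ ε ×ˢ closedBall 0 ρ) :=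
      (continuousOn_const.div continuousOn_fst hne).smul continuousOn_snd
    have c3 : ContinuousOn (fun q : ℝ × EuclideanSpace ℝ (Fin n) => (-(m / q.1 ^ 2)) • q.2)
        (closedBall l₀ ε ×ˢ closedBall 0 ρ) :=
      (continuousOn_const.div (continuousOn_fst.pow 2)
        (fun q hq => pow_ne_zero 2 (hne q hq))).neg.smul continuousOn_snd
    have m1 : Set.MapsTo (fun q : ℝ × EuclideanSpace ℝ (Fin n) => (m * q.1) • q.2)
        (closedBall l₀ ε ×ˢ closedBall 0 ρ) (ball 0 r) := fun q hq =>
      hmem _ (mul_pos hm (hεI hq.1).1).le (hεI hq.1).2.1 _ (by simpa using hq.2)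
    have m2 : Set.MapsTo (fun q : ℝ × EuclideanSpace ℝ (Fin n) => (m / q.1) • q.2)
        (closedBall l₀ ε ×ˢ closedBall 0 ρ) (ball 0 r) := fun q hq =>
      hmem _ (div_pos hm (hεI hq.1).1).le (hεI hq.1).2.2 _ (by simpa using hq.2)
    exact (((hfc.comp c1 m1).clm_apply (by fun_prop)).mul (hsm.continuousOn.comp c2 m2)).add
      ((hsm.continuousOn.comp c1 m1).mul ((hfc.comp c2 m2).clm_apply c3))
  obtain ⟨C, hC⟩ := ((isCompact_closedBall l₀ ε).prod
    (isCompact_closedBall (0 : EuclideanSpace ℝ (Fin n)) ρ)).exists_bound_of_continuousOn hkc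
  -- measurability / integrability
  let Ub : ℝ → Set (EuclideanSpace ℝ (Fin n)) := fun l =>
    (fun x => (m * l) • x) ⁻¹' (ball 0 r) ∩ (fun x => (m / l) • x) ⁻¹' (ball 0 r)
  have hUo : ∀ l, IsOpen (Ub l) := fun l =>
    (isOpen_ball.preimage (by fun_prop)).inter (isOpen_ball.preimage (by fun_prop))
  have hUs : ∀ l ∈ closedBall l₀ ε, closedBall 0 ρ ⊆ Ub l := fun l hl x hx =>
    ⟨hmem _ (mul_pos hm (hεI hl).1).le (hεI hl).2.1 _ (by simpa using hx),
     hmem _ (div_pos hm (hεI hl).1).le (hεI hl).2.2 _ (by simpa using hx)⟩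
  have hl₀ : l₀ ∈ closedBall l₀ ε := mem_closedBall_self hε.le
  have hFint : ∀ l ∈ closedBall l₀ ε, Integrable (fun x : EuclideanSpace ℝ (Fin n) =>
      p (‖x‖ ^ 2) * (h ((m * l) • x) * h ((m / l) • x))) := fun l hl =>
    hg_int (hUo l) hpη hpη0 (hUs l hl)
      ((hsm.continuousOn.comp (by fun_prop) (fun x hx => hx.1)).mul
        (hsm.continuousOn.comp (by fun_prop) (fun x hx => hx.2)))
  have hmain := hasDerivAt_integral_of_dominated_loc_of_deriv_le
    (μ := (volume : Measure (EuclideanSpace ℝ (Fin n))))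
    (F := fun l x => p (‖x‖ ^ 2) * (h ((m * l) • x) * h ((m / l) • x)))
    (F' := fun l x => p (‖x‖ ^ 2) * k l x) (x₀ := l₀) (s := closedBall l₀ ε)
    (bound := fun x => |p (‖x‖ ^ 2)| * C)
    (closedBall_mem_nhds l₀ hε)
    (by filter_upwards [closedBall_mem_nhds l₀ hε] with l hl
        exact (hFint l hl).aestronglyMeasurable)
    (hFint l₀ hl₀)
    (hg_int (hUo l₀) hpη hpη0 (hUs l₀ hl₀) (by
      refine (((hfc.comp (by fun_prop) (fun x hx => hx.1)).clm_apply (by fun_prop)).mul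
        (hsm.continuousOn.comp (by fun_prop) (fun x hx => hx.2))).add
        ((hsm.continuousOn.comp (by fun_prop) (fun x hx => hx.1)).mul
        ((hfc.comp (by fun_prop) (fun x hx => hx.2)).clm_apply (by fun_prop))))).aestronglyMeasurable
    (Filter.Eventually.of_forall fun x l hl => by
      by_cases hx : ‖x‖ ≤ ρ
      · rw [norm_mul]
        gcongr
        · exact le_rfl
        · exact hC (l, x) ⟨hl, by simpa using hx⟩
      · simp [hpη0 x (not_le.1 hx).le])
    (hg_int (ρ := ρ) isOpen_univ hpη.abs (fun x hx => by simp [hpη0 x hx]) (Set.subset_univ _)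
      continuousOn_const)
    (Filter.Eventually.of_forall fun x l hl => by
      by_cases hx : ‖x‖ ≤ ρ
      · have hl' := hεI hl
        have d1 : HasDerivAt (fun l : ℝ => (m * l) • x) (m • x) l := by
          simpa using ((hasDerivAt_id l).const_mul m).smul_const x
        have d2 : HasDerivAt (fun l : ℝ => (m / l) • x) ((-(m / l ^ 2)) • x) l := by
          have := ((hasDerivAt_inv hl'.1.ne').const_mul m).smul_const x
          have e : -(m / l ^ 2) = m * -(l ^ 2)⁻¹ := by ring
          rw [e]
          simp only [div_eq_mul_inv]
          exact this
        have f1 := (hdiff _ (hmem _ (mul_pos hm hl'.1).le hl'.2.1 x hx)).hasFDerivAt.comp_hasDerivAt l d1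
        have f2 := (hdiff _ (hmem _ (div_pos hm hl'.1).le hl'.2.2 x hx)).hasFDerivAt.comp_hasDerivAt l d2
        exact (f1.mul f2).const_mul _
      · simp only [hpη0 x (not_le.1 hx).le, zero_mul]
        exact hasDerivAt_const _ _)
  have hz : ∫ x : EuclideanSpace ℝ (Fin n), p (‖x‖ ^ 2) * k l₀ x = 0 := by
    have hib := hg_ibp (hUo l₀) (u := fun x => h ((m * l₀) • x)) (v := fun x => h ((m / l₀) • x))
      hρ0 (hUs l₀ hl₀) hP hp hP0
      (hsm.comp (by fun_prop) (fun x hx => hx.1)) (hsm.comp (by fun_prop) (fun x hx => hx.2))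
      (fun x hx => by rw [hg_scale, hharm _ hx.1, mul_zero])
      (fun x hx => by rw [hg_scale, hharm _ hx.2, mul_zero])
    have : (fun x : EuclideanSpace ℝ (Fin n) => p (‖x‖ ^ 2) * k l₀ x) = fun x => l₀⁻¹ *
        (p (‖x‖ ^ 2) * (h ((m / l₀) • x) * fderiv ℝ (fun x => h ((m * l₀) • x)) x x
          - h ((m * l₀) • x) * fderiv ℝ (fun x => h ((m / l₀) • x)) x x)) := by
      funext x
      rw [fderiv_comp_smul, fderiv_comp_smul]
      simp only [k, _root_.smul_apply, smul_eq_mul, map_smul]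
      field_simp
      ring
    rw [this, integral_const_mul, hib, mul_zero]
  have := hmain.2
  rwa [hz] at this

theorem hg_seq {f : ℕ → ℝ} {Q C : ℝ} (hQ : 0 < Q) (hf : ∀ k, 0 ≤ f k)
    (hc : ∀ k, f (k + 1) ^ 2 ≤ f k * f (k + 2)) (hb : ∀ᶠ k in Filter.atTop, f k ≤ C * Q ^ k) :
    f 1 ≤ Q * f 0 := by
  by_contra hcon
  push Not at hcon
  have h0 : 0 < f 0 := by
    rcases (hf 0).lt_or_eq with h | h
    · exact h
    · have := hc 0
      rw [← h] at this hcon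
      simp at hcon this
      rw [this] at hcon
      exact absurd hcon (lt_irrefl _)
  set c := f 1 / f 0 with hcd
  have hcQ : Q < c := by rw [hcd, lt_div_iff₀ h0]; exact hcon
  have hc0 : 0 < c := hQ.trans hcQ
  have step : ∀ k, 0 < f k ∧ c * f k ≤ f (k + 1) := by
    intro k
    induction k with
    | zero => exact ⟨h0, by rw [hcd, div_mul_cancel₀ _ h0.ne']⟩
    | succ k ih =>
      have hp : 0 < f (k + 1) := lt_of_lt_of_le (mul_pos hc0 ih.1) ih.2
      refine ⟨hp, ?_⟩
      have h1 := hc k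
      have h2 : (c * f (k + 1)) * f k ≤ f (k + 2) * f k := by nlinarith
      exact le_of_mul_le_mul_right h2 ih.1
  have hlow : ∀ k, c ^ k * f 0 ≤ f k := by
    intro k
    induction k with
    | zero => simp
    | succ k ih =>
      calc c ^ (k + 1) * f 0 = c * (c ^ k * f 0) := by ring
        _ ≤ c * f k := by gcongr
        _ ≤ _ := (step k).2
  have ht : Filter.Tendsto (fun k : ℕ => (c / Q) ^ k) Filter.atTop Filter.atTop :=
    tendsto_pow_atTop_atTop_of_one_lt (by rw [lt_div_iff₀ hQ]; linarith)
  obtain ⟨k, hk1, hk2⟩ := (hb.and (ht.eventually_gt_atTop (C / f 0))).exists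
  rw [div_pow, div_lt_div_iff₀ h0 (by positivity)] at hk2
  linarith [hlow k]

theorem hg_growth {n : ℕ} {r s ρ : ℝ} (hs : 0 < s) (hsr : s < r) (hρ0 : 0 ≤ ρ)
    (hρ1 : ρ < 1)
    (h : EuclideanSpace ℝ (Fin n) → ℝ)
    (hsm : ContDiffOn ℝ 2 h (Metric.ball 0 r))
    (hharm : ∀ x ∈ Metric.ball (0 : EuclideanSpace ℝ (Fin n)) r, laplacian h x = 0)
    (h0 : h 0 = 0)
    {P p : ℝ → ℝ} (hP : ∀ t, HasDerivAt P (p t) t) (hp : Continuous p) (hpn : ∀ t, 0 ≤ p t)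
    (hP0 : ∀ t, ρ ^ 2 ≤ t → P t = 0) (hp0 : ∀ t, ρ ^ 2 ≤ t → p t = 0) :
    ∀ t, 0 < t → t ≤ r →
      Integrable (fun x : EuclideanSpace ℝ (Fin n) => p (‖x‖ ^ 2) * h (t • x) ^ 2) ∧
    (∫ x : EuclideanSpace ℝ (Fin n), p (‖x‖ ^ 2) * h (s • x) ^ 2) ≤
      (s / r) ^ 2 * ∫ x : EuclideanSpace ℝ (Fin n), p (‖x‖ ^ 2) * h (r • x) ^ 2 := by
  have hr : 0 < r := hs.trans hsr
  have hpη : Continuous (fun x : EuclideanSpace ℝ (Fin n) => p (‖x‖ ^ 2)) := by fun_prop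
  have hpη0 : ∀ x : EuclideanSpace ℝ (Fin n), ρ ≤ ‖x‖ → p (‖x‖ ^ 2) = 0 := fun x hx =>
    hp0 _ (by gcongr)
  have hmem : ∀ c : ℝ, 0 < c → c ≤ r → ∀ x : EuclideanSpace ℝ (Fin n), ‖x‖ ≤ ρ →
      c • x ∈ ball (0 : EuclideanSpace ℝ (Fin n)) r := by
    intro c hc hcr x hx
    rw [mem_ball_zero_iff, norm_smul, Real.norm_of_nonneg hc.le]
    nlinarith [norm_nonneg x]
  have hint : ∀ a b, 0 < a → a ≤ r → 0 < b → b ≤ r →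
      Integrable (fun x : EuclideanSpace ℝ (Fin n) => p (‖x‖ ^ 2) * (h (a • x) * h (b • x))) := by
    intro a b ha har hb hbr
    refine hg_int (U := (fun x => a • x) ⁻¹' (ball 0 r) ∩ (fun x => b • x) ⁻¹' (ball 0 r))
      ((isOpen_ball.preimage (by fun_prop)).inter (isOpen_ball.preimage (by fun_prop)))
      hpη hpη0 ?_ ((hsm.continuousOn.comp (by fun_prop) (fun x hx => hx.1)).mul
        (hsm.continuousOn.comp (by fun_prop) (fun x hx => hx.2)))
    intro x hx
    rw [mem_closedBall_zero_iff] at hx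
    exact ⟨hmem a ha har x hx, hmem b hb hbr x hx⟩
  have hint2 : ∀ t, 0 < t → t ≤ r →
      Integrable (fun x : EuclideanSpace ℝ (Fin n) => p (‖x‖ ^ 2) * h (t • x) ^ 2) := by
    intro t ht htr
    simpa [sq] using hint t t ht htr ht htr
  intro t ht htr
  refine ⟨hint2 t ht htr, ?_⟩
  -- log-convexity
  let F : ℝ → ℝ := fun t => ∫ x : EuclideanSpace ℝ (Fin n), p (‖x‖ ^ 2) * h (t • x) ^ 2
  have hF0 : ∀ t, 0 ≤ F t := fun t => integral_nonneg fun x => mul_nonneg (hpn _) (sq_nonneg _)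
  have hlog : ∀ m l, 0 < m → 1 ≤ l → m * l ≤ r → F m ^ 2 ≤ F (m * l) * F (m / l) := by
    intro m l hm hl hml
    have hl0 : 0 < l := by linarith
    have hmd : m / l ≤ m := div_le_self hm.le hl
    have hmr : m ≤ r := le_trans (le_mul_of_one_le_right hm.le hl) hml
    have hder : ∀ y ∈ Set.Icc 1 l, HasDerivAt (fun l => ∫ x : EuclideanSpace ℝ (Fin n),
        p (‖x‖ ^ 2) * (h ((m * l) • x) * h ((m / l) • x))) 0 y := by
      intro y hy
      have hy0 : 0 < y := by linarith [hy.1]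
      have h1 : m * y ≤ r := le_trans (by gcongr; exact hy.2) hml
      have h2 : m / y ≤ r := le_trans (div_le_self hm.le hy.1) hmr
      have h3 : 0 < m * y := by positivity
      have h4 : 0 < m / y := by positivity
      exact hg_deriv hρ0 h hsm hharm hP hp hP0 hp0 hm hy0 (by nlinarith) (by nlinarith)
    have hconst := constant_of_has_deriv_right_zero
      (fun y hy => (hder y hy).continuousAt.continuousWithinAt)
      (fun y hy => (hder y (Set.Ico_subset_Icc_self hy)).hasDerivWithinAt) l ⟨hl, le_rfl⟩
    have hFm : F m = ∫ x : EuclideanSpace ℝ (Fin n),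
        p (‖x‖ ^ 2) * (h ((m * l) • x) * h ((m / l) • x)) := by
      rw [hconst]
      simp [F, sq]
    have hd := discrim_le_zero (a := F (m * l)) (b := 2 * F m) (c := F (m / l)) (by
      intro y
      have i1 := hint2 (m * l) (by positivity) hml
      have i2 := hint (m * l) (m / l) (by positivity) hml (by positivity) (hmd.trans hmr)
      have i3 := hint2 (m / l) (by positivity) (hmd.trans hmr)
      have i12 : Integrable (fun x : EuclideanSpace ℝ (Fin n) =>
          y * y * (p (‖x‖ ^ 2) * h ((m * l) • x) ^ 2)
          + 2 * y * (p (‖x‖ ^ 2) * (h ((m * l) • x) * h ((m / l) • x)))) :=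
        (i1.const_mul _).add (i2.const_mul _)
      have hpos : 0 ≤ ∫ x : EuclideanSpace ℝ (Fin n),
          p (‖x‖ ^ 2) * (y * h ((m * l) • x) + h ((m / l) • x)) ^ 2 :=
        integral_nonneg fun x => mul_nonneg (hpn _) (sq_nonneg _)
      have heq : (fun x : EuclideanSpace ℝ (Fin n) =>
          p (‖x‖ ^ 2) * (y * h ((m * l) • x) + h ((m / l) • x)) ^ 2) = fun x =>
          y * y * (p (‖x‖ ^ 2) * h ((m * l) • x) ^ 2)
          + 2 * y * (p (‖x‖ ^ 2) * (h ((m * l) • x) * h ((m / l) • x)))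
          + (p (‖x‖ ^ 2) * h ((m / l) • x) ^ 2) := by
        funext x; ring
      rw [heq, integral_add i12 i3,
        integral_add (i1.const_mul _) (i2.const_mul _), integral_const_mul, integral_const_mul,
        ← hFm] at hpos
      change 0 ≤ y * y * F (m * l) + 2 * y * F m + F (m / l) at hpos
      linarith)
    unfold discrim at hd
    linarith
  -- decay at zero
  have hdiff : DifferentiableAt ℝ h 0 :=
    (hsm.contDiffAt (isOpen_ball.mem_nhds (mem_ball_self hr))).differentiableAt (by norm_num)
  obtain ⟨c, hc⟩ := hdiff.isBigO_sub.bound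
  simp only [h0, sub_zero] at hc
  obtain ⟨ε, hε, hεc⟩ := Metric.eventually_nhds_iff.1 hc
  have hsmall : ∀ t, 0 < t → t ≤ r → t < ε →
      F t ≤ (c ^ 2 * ∫ x : EuclideanSpace ℝ (Fin n), p (‖x‖ ^ 2) * 1) * t ^ 2 := by
    intro t ht htr hte
    have i1 : Integrable (fun x : EuclideanSpace ℝ (Fin n) => p (‖x‖ ^ 2) * 1) :=
      hg_int (ρ := ρ) isOpen_univ hpη hpη0 (Set.subset_univ _) continuousOn_const
    have : F t ≤ ∫ x : EuclideanSpace ℝ (Fin n), (c ^ 2 * t ^ 2) * (p (‖x‖ ^ 2) * 1) := by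
      refine integral_mono (hint2 t ht htr) (i1.const_mul _) fun x => ?_
      by_cases hx : ‖x‖ ≤ ρ
      · have h1 : ‖t • x‖ ≤ t := by
          rw [norm_smul, Real.norm_of_nonneg ht.le]
          nlinarith
        have h2 := hεc (y := t • x) (by rw [dist_zero_right]; linarith)
        have h3 : h (t • x) ^ 2 ≤ c ^ 2 * t ^ 2 := by
          rw [Real.norm_eq_abs] at h2
          calc h (t • x) ^ 2 = |h (t • x)| ^ 2 := (sq_abs _).symm
            _ ≤ (c * ‖t • x‖) ^ 2 := by gcongr
            _ = c ^ 2 * ‖t • x‖ ^ 2 := by ring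
            _ ≤ _ := by gcongr
        have := mul_le_mul_of_nonneg_left h3 (hpn (‖x‖ ^ 2))
        simp only []
        linarith
      · simp [hpη0 x (not_le.1 hx).le]
    rw [integral_const_mul] at this
    linarith
  -- conclude
  have hq0 : 0 < s / r := by positivity
  have hq1 : s / r < 1 := by rw [div_lt_one hr]; exact hsr
  set q := s / r with hq
  have hfin := hg_seq (f := fun k => F (r * q ^ k)) (Q := q ^ 2)
    (C := (c ^ 2 * ∫ x : EuclideanSpace ℝ (Fin n), p (‖x‖ ^ 2) * 1) * r ^ 2) (by positivity)
    (fun k => hF0 _) (fun k => by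
      have := hlog (r * q ^ (k + 1)) q⁻¹ (by positivity) ((one_le_inv₀ hq0).2 hq1.le) (by
        have : r * q ^ (k + 1) * q⁻¹ = r * q ^ k := by
          rw [pow_succ]; field_simp
        rw [this]
        exact mul_le_of_le_one_right hr.le (pow_le_one₀ hq0.le hq1.le))
      have e1 : r * q ^ (k + 1) * q⁻¹ = r * q ^ k := by
        rw [pow_succ]; field_simp
      have e2 : r * q ^ (k + 1) / q⁻¹ = r * q ^ (k + 2) := by
        rw [div_inv_eq_mul]; ring
      rwa [e1, e2] at this)
    (by
      have ht : Filter.Tendsto (fun k : ℕ => r * q ^ k) Filter.atTop (𝓝 (r * 0)) :=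
        (tendsto_pow_atTop_nhds_zero_of_lt_one hq0.le hq1).const_mul r
      rw [mul_zero] at ht
      filter_upwards [ht.eventually (gt_mem_nhds hε)] with k hk
      refine (hsmall _ (by positivity)
        (mul_le_of_le_one_right hr.le (pow_le_one₀ hq0.le hq1.le)) hk).trans (le_of_eq ?_)
      ring)
  have e1 : r * q ^ 1 = s := by rw [hq]; field_simp
  simp only [e1, pow_zero, mul_one] at hfin
  exact hfin

theorem hg_integrable {n : ℕ} {r : ℝ} (hr : 0 < r)
    (h : EuclideanSpace ℝ (Fin n) → ℝ)
    (hsm : ContDiffOn ℝ 2 h (Metric.ball 0 r))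
    (hdir : IntegrableOn (fun x => ‖fderiv ℝ h x‖ ^ 2) (Metric.ball 0 r)) :
    IntegrableOn (fun x => h x ^ 2) (ball 0 r) := by
  let G : EuclideanSpace ℝ (Fin n) → ℝ := (ball 0 r).indicator (fun x => ‖fderiv ℝ h x‖ ^ 2)
  have hGm : Measurable G :=
    ((measurable_fderiv ℝ h).norm.pow_const 2).indicator measurableSet_ball
  have hGi : Integrable G := hdir.integrable_indicator measurableSet_ball
  have hG0 : ∀ x, 0 ≤ G x := fun x => Set.indicator_nonneg (fun _ _ => sq_nonneg _) x
  let ν : Measure ℝ := volume.restrict (Set.Ioc (1 / 2) 1)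
  have hprod : Integrable (fun z : EuclideanSpace ℝ (Fin n) × ℝ => G (z.2 • z.1))
      ((volume : Measure (EuclideanSpace ℝ (Fin n))).prod ν) := by
    have hm : Measurable (fun z : EuclideanSpace ℝ (Fin n) × ℝ => G (z.2 • z.1)) :=
      hGm.comp (by fun_prop)
    rw [integrable_prod_iff' hm.aestronglyMeasurable]
    constructor
    · refine (ae_restrict_mem measurableSet_Ioc).mono fun t ht => ?_
      exact hGi.comp_smul (by linarith [ht.1] : (0:ℝ) < t).ne'
    · have heq : ∀ t : ℝ, ∫ x : EuclideanSpace ℝ (Fin n), ‖G (t • x)‖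
          = |(t ^ n)⁻¹| * ∫ x, G x := by
        intro t
        simp_rw [fun t x => Real.norm_of_nonneg (hG0 (t • x))]
        rw [Measure.integral_comp_smul]
        simp
      simp only [heq]
      refine Integrable.mul_const ?_ _
      have : ContinuousOn (fun t : ℝ => |(t ^ n)⁻¹|) (Set.Icc (1 / 2) 1) := by
        refine ContinuousOn.abs (ContinuousOn.inv₀ (by fun_prop) fun t ht => ?_)
        have : (0:ℝ) < t := by linarith [ht.1]
        positivity
      exact (this.integrableOn_Icc).mono_set Set.Ioc_subset_Icc_self
  have hleft := hprod.integral_prod_left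
  obtain ⟨M, hM⟩ := (isCompact_closedBall (0 : EuclideanSpace ℝ (Fin n)) (r / 2)).exists_bound_of_continuousOn
    (hsm.continuousOn.mono (closedBall_subset_ball (by linarith)))
  have hfc : ContinuousOn (fderiv ℝ h) (ball 0 r) :=
    hsm.continuousOn_fderiv_of_isOpen isOpen_ball (by norm_num)
  refine Integrable.mono' (g := fun x => 2 * M ^ 2 + r ^ 2 * ∫ t, G (t • x) ∂ν) ?_ ?_ ?_
  · refine Integrable.add ?_ (hleft.integrableOn.const_mul _)
    exact integrableOn_const (by exact measure_ball_lt_top.ne)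
  · exact ((hsm.continuousOn.pow 2).aestronglyMeasurable measurableSet_ball)
  · refine (ae_restrict_mem measurableSet_ball).mono fun x hx => ?_
    have hxr : ‖x‖ < r := by simpa using hx
    have hmem : ∀ t ∈ Set.Icc (1 / 2 : ℝ) 1, t • x ∈ ball (0 : EuclideanSpace ℝ (Fin n)) r := by
      intro t ht
      rw [mem_ball_zero_iff, norm_smul, Real.norm_of_nonneg (by linarith [ht.1])]
      nlinarith [norm_nonneg x, ht.2]
    let g : ℝ → ℝ := fun t => ‖fderiv ℝ h (t • x)‖
    have hgc : ContinuousOn g (Set.Icc (1 / 2) 1) :=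
      (hfc.comp (by fun_prop) hmem).norm
    have huI : Set.uIcc (1 / 2 : ℝ) 1 = Set.Icc (1 / 2) 1 := Set.uIcc_of_le (by norm_num)
    have hg1 : IntervalIntegrable g volume (1 / 2) 1 :=
      ContinuousOn.intervalIntegrable (by rwa [huI])
    have hg2 : IntervalIntegrable (fun t => g t ^ 2) volume (1 / 2) 1 :=
      ContinuousOn.intervalIntegrable (by rw [huI]; exact hgc.pow 2)
    have hGg : ∫ t, G (t • x) ∂ν = ∫ t in (1 / 2 : ℝ)..1, g t ^ 2 := by
      rw [intervalIntegral.integral_of_le (by norm_num)]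
      refine setIntegral_congr_fun measurableSet_Ioc fun t ht => ?_
      exact Set.indicator_of_mem (hmem t ⟨ht.1.le, ht.2⟩) _
    set J := ∫ t in (1 / 2 : ℝ)..1, g t with hJ
    have hJ2 : 2 * J ^ 2 ≤ ∫ t in (1 / 2 : ℝ)..1, g t ^ 2 := by
      have h1 : 0 ≤ ∫ t in (1 / 2 : ℝ)..1, (g t - 2 * J) ^ 2 :=
        intervalIntegral.integral_nonneg (by norm_num) fun t _ => sq_nonneg _
      have h2 : (fun t => (g t - 2 * J) ^ 2) = fun t => (g t ^ 2 - 4 * J * g t) + 4 * J ^ 2 := by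
        funext t; ring
      rw [h2, intervalIntegral.integral_add (hg2.sub (hg1.const_mul _)) (by simp),
        intervalIntegral.integral_sub hg2 (hg1.const_mul _), intervalIntegral.integral_const_mul,
        intervalIntegral.integral_const, ← hJ] at h1
      simp only [smul_eq_mul] at h1
      nlinarith
    have hFTC : ∫ t in (1 / 2 : ℝ)..1, fderiv ℝ h (t • x) x = h x - h ((1 / 2 : ℝ) • x) := by
      have := intervalIntegral.integral_eq_sub_of_hasDerivAt (a := (1 / 2 : ℝ)) (b := 1)
        (f := fun t : ℝ => h (t • x)) (f' := fun t => fderiv ℝ h (t • x) x) (fun t ht => by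
          rw [huI] at ht
          have d1 : HasDerivAt (fun t : ℝ => t • x) x t := by
            simpa using (hasDerivAt_id t).smul_const x
          exact ((hsm.contDiffAt (isOpen_ball.mem_nhds (hmem t ht))).differentiableAt
            (by norm_num)).hasFDerivAt.comp_hasDerivAt t d1)
        (ContinuousOn.intervalIntegrable (by
          rw [huI]; exact (hfc.comp (by fun_prop) hmem).clm_apply continuousOn_const))
      simpa using this
    have hle : |h x - h ((1 / 2 : ℝ) • x)| ≤ r * J := by
      rw [← hFTC, ← Real.norm_eq_abs, hJ, ← intervalIntegral.integral_const_mul]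
      refine intervalIntegral.norm_integral_le_of_norm_le (by norm_num)
        (Filter.Eventually.of_forall fun t _ => ?_) (hg1.const_mul r)
      refine (ContinuousLinearMap.le_opNorm _ _).trans ?_
      rw [mul_comm]
      gcongr
    have hhalf : |h ((1 / 2 : ℝ) • x)| ≤ M := by
      refine hM _ ?_
      rw [mem_closedBall_zero_iff, norm_smul, Real.norm_of_nonneg (by norm_num)]
      linarith
    rw [hGg, Real.norm_of_nonneg (sq_nonneg _)]
    have a1 : (h x - h ((1 / 2 : ℝ) • x)) ^ 2 ≤ r ^ 2 * J ^ 2 := by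
      rw [← mul_pow]
      exact sq_le_sq' (abs_le.1 hle).1 (abs_le.1 hle).2
    have a2 : h ((1 / 2 : ℝ) • x) ^ 2 ≤ M ^ 2 := sq_le_sq' (abs_le.1 hhalf).1 (abs_le.1 hhalf).2
    have a3 := mul_le_mul_of_nonneg_left hJ2 (sq_nonneg r)
    nlinarith [sq_nonneg (h x - 2 * h ((1 / 2 : ℝ) • x))]

theorem hg_cutoff {σ ρ : ℝ} (hσ : 0 < σ) (hσρ : σ < ρ) : ∃ P p : ℝ → ℝ,
    (∀ t, HasDerivAt P (p t) t) ∧ Continuous p ∧ (∀ t, 0 ≤ p t) ∧ (∀ t, p t ≤ 1) ∧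
    (∀ t, ρ ^ 2 ≤ t → P t = 0) ∧ (∀ t, ρ ^ 2 ≤ t → p t = 0) ∧ (∀ t, t ≤ σ ^ 2 → p t = 1) := by
  have hd : 0 < ρ ^ 2 - σ ^ 2 := by nlinarith
  let p : ℝ → ℝ := fun t => max 0 (min 1 ((ρ ^ 2 - t) / (ρ ^ 2 - σ ^ 2)))
  have hpc : Continuous p := by fun_prop
  have hp0 : ∀ t, ρ ^ 2 ≤ t → p t = 0 := fun t ht =>
    max_eq_left ((min_le_right _ _).trans (div_nonpos_of_nonpos_of_nonneg (by linarith) hd.le))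
  refine ⟨fun t => ∫ x in (ρ ^ 2)..t, p x, p, ?_, hpc, fun t => le_max_left _ _,
    fun t => max_le zero_le_one (min_le_left _ _), ?_, hp0, ?_⟩
  · intro t
    exact (hpc.integral_hasStrictDerivAt (ρ ^ 2) t).hasDerivAt
  · intro t ht
    change ∫ x in (ρ ^ 2)..t, p x = 0
    rw [intervalIntegral.integral_congr (g := fun _ => (0 : ℝ))]
    · simp
    · intro x hx
      rw [Set.uIcc_of_le ht] at hx
      exact hp0 x hx.1
  · intro t ht
    have : 1 ≤ (ρ ^ 2 - t) / (ρ ^ 2 - σ ^ 2) := by rw [le_div_iff₀ hd]; linarith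
    simp [p, min_eq_left this]

theorem hg_shrink {n : ℕ} {r s σ : ℝ} (hs : 0 < s) (hsr : s < r) (hσ : 0 < σ) (hσ1 : σ < 1)
    (h : EuclideanSpace ℝ (Fin n) → ℝ)
    (hsm : ContDiffOn ℝ 2 h (Metric.ball 0 r))
    (hharm : ∀ x ∈ Metric.ball (0 : EuclideanSpace ℝ (Fin n)) r, laplacian h x = 0)
    (hint : IntegrableOn (fun x => h x ^ 2) (ball 0 r))
    (h0 : h 0 = 0) :
    (∫ x in Metric.ball (0 : EuclideanSpace ℝ (Fin n)) (s * σ), (h x) ^ 2) ≤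
      (s / r) ^ (n + 2) * ∫ x in Metric.ball (0 : EuclideanSpace ℝ (Fin n)) r, (h x) ^ 2 := by
  have hr : 0 < r := hs.trans hsr
  obtain ⟨P, p, hP, hp, hpn, hp1, hP0, hp0, hps⟩ :=
    hg_cutoff (σ := σ) (ρ := (1 + σ) / 2) hσ (by linarith)
  have hg := hg_growth hs hsr (by linarith) (by linarith) h hsm hharm h0 hP hp hpn hP0 hp0
  have h1 := (hg s hs hsr.le).2
  have i1 := (hg s hs hsr.le).1
  rw [← integral_indicator measurableSet_ball, ← integral_indicator measurableSet_ball]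
  set g1 := (ball (0 : EuclideanSpace ℝ (Fin n)) (s * σ)).indicator (fun x => h x ^ 2) with hg1
  set g2 := (ball (0 : EuclideanSpace ℝ (Fin n)) r).indicator (fun x => h x ^ 2) with hg2
  have j1 : ∫ x, g1 (s • x) ≤ ∫ x : EuclideanSpace ℝ (Fin n), p (‖x‖ ^ 2) * h (s • x) ^ 2 := by
    refine integral_mono_of_nonneg (Filter.Eventually.of_forall fun x =>
      Set.indicator_nonneg (fun _ _ => sq_nonneg _) _) i1 (Filter.Eventually.of_forall fun x => ?_)
    simp only [hg1, Set.indicator]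
    split_ifs with hx
    · rw [mem_ball_zero_iff, norm_smul, Real.norm_of_nonneg hs.le] at hx
      have : ‖x‖ < σ := lt_of_mul_lt_mul_left hx hs.le
      rw [hps _ (by gcongr), one_mul]
    · exact mul_nonneg (hpn _) (sq_nonneg _)
  have j2 : ∫ x : EuclideanSpace ℝ (Fin n), p (‖x‖ ^ 2) * h (r • x) ^ 2 ≤ ∫ x, g2 (r • x) := by
    refine integral_mono_of_nonneg (Filter.Eventually.of_forall fun x =>
      mul_nonneg (hpn _) (sq_nonneg _)) ((hint.integrable_indicator measurableSet_ball).comp_smul hr.ne')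
      (Filter.Eventually.of_forall fun x => ?_)
    simp only [hg2, Set.indicator]
    split_ifs with hx
    · exact mul_le_of_le_one_left (sq_nonneg _) (hp1 _)
    · rw [mem_ball_zero_iff, norm_smul, Real.norm_of_nonneg hr.le] at hx
      have : 1 ≤ ‖x‖ := by
        by_contra hc
        exact hx (by nlinarith)
      rw [hp0 _ (by gcongr; linarith), zero_mul]
  rw [Measure.integral_comp_smul_of_nonneg _ _ _ (hR := hs.le), finrank_euclideanSpace_fin, smul_eq_mul] at j1
  rw [Measure.integral_comp_smul_of_nonneg _ _ _ (hR := hr.le), finrank_euclideanSpace_fin, smul_eq_mul] at j2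
  have h2 : (s ^ n)⁻¹ * ∫ x, g1 x ≤ (s / r) ^ 2 * ((r ^ n)⁻¹ * ∫ x, g2 x) :=
    j1.trans (h1.trans (by gcongr))
  have h3 := mul_le_mul_of_nonneg_left h2 (pow_pos hs n).le
  have hsn := (pow_pos hs n).ne'
  rw [← mul_assoc, mul_inv_cancel₀ hsn, one_mul] at h3
  refine h3.trans (le_of_eq ?_)
  rw [pow_add, div_pow s r n]
  ring

theorem harmonic_L2_growth {n : ℕ} (r s : ℝ) (hr : 0 < r) (hs : 0 < s) (hsr : s < r)
    (h : EuclideanSpace ℝ (Fin n) → ℝ)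
    (hsm : ContDiffOn ℝ 2 h (Metric.ball 0 r))
    (hharm : ∀ x ∈ Metric.ball (0 : EuclideanSpace ℝ (Fin n)) r, laplacian h x = 0)
    (hdir : IntegrableOn (fun x => ‖fderiv ℝ h x‖ ^ 2) (Metric.ball 0 r))
    (h0 : h 0 = 0) :
    (∫ x in Metric.ball (0 : EuclideanSpace ℝ (Fin n)) s, (h x) ^ 2) ≤
      (s / r) ^ (n + 2) * ∫ x in Metric.ball (0 : EuclideanSpace ℝ (Fin n)) r, (h x) ^ 2 := by
  have hint := hg_integrable hr h hsm hdir
  have hcont : Filter.Tendsto (fun t : ℝ => (t / r) ^ (n + 2) *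
      ∫ x in Metric.ball (0 : EuclideanSpace ℝ (Fin n)) r, (h x) ^ 2) (𝓝[>] s)
      (𝓝 ((s / r) ^ (n + 2) * ∫ x in Metric.ball (0 : EuclideanSpace ℝ (Fin n)) r, (h x) ^ 2)) := by
    have : Continuous (fun t : ℝ => (t / r) ^ (n + 2) *
      ∫ x in Metric.ball (0 : EuclideanSpace ℝ (Fin n)) r, (h x) ^ 2) := by fun_prop
    exact this.continuousAt.tendsto.mono_left nhdsWithin_le_nhds
  refine ge_of_tendsto hcont ?_
  filter_upwards [Ioo_mem_nhdsGT hsr] with t ht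
  have ht0 : 0 < t := hs.trans ht.1
  have := hg_shrink ht0 ht.2 (div_pos hs ht0) ((div_lt_one ht0).2 ht.1) h hsm hharm hint h0
  rwa [mul_div_cancel₀ _ ht0.ne'] at this
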